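/- Fix a finite graph G=(V,E) with m = |E| edges, a nonempty family Γ of walks on G, and 1 ≤ p < ∞. Then the function σ ↦ Mod_p(Γ;σ) on positive weight functions σ:E→(0,∞) is Lipschitz continuous with respect to the max norm, with constant m: for all weights σ₁, σ₂, |Mod_p(Γ;σ₂) − Mod_p(Γ;σ₁)| ≤ m·max_{e∈E}|σ₂(e) − σ₁(e)|. Moreover, σ ↦ Mod_p(Γ;σ) is concave: for σ₁, σ₂ positive weights and θ ∈ [0,1], θ·Mod_p(Γ;σ₁) + (1−θ)·Mod_p(Γ;σ₂) ≤ Mod_p(Γ; θσ₁ + (1−θ)σ₂). -/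

import Mathlib

/-!
For a fixed density `ρ` the energy is linear in `σ`, and the admissible set does not depend on
`σ`. The modulus is therefore an infimum of linear functions of `σ`, hence concave.

For the Lipschitz bound, an admissible density may be truncated at `1`: it stays admissible
(`IsAdmissible.min_one`) and its energy does not increase. On densities with values in `[0, 1]`
each coefficient `|ρ e| ^ p` of the linear function is at most `1`, so changing `σ` changes the
energy by at most `∑ e, |σ₂ e - σ₁ e|`, and this passes to the infimum (`modulus_sub_le`).
-/

open scoped BigOperators

variable {V : Type*} [Fintype V] [DecidableEq V]

/-- The ρ-length of a walk: ℓ_ρ(γ) = Σ_{e∈E} N(γ,e) ρ(e), where N(γ,e) is the number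
of times the walk γ traverses the edge e. -/
noncomputable def rhoLength (G : SimpleGraph V) [DecidableRel G.Adj]
    (ρ : G.edgeSet → ℝ) {u v : V} (w : G.Walk u v) : ℝ :=
  ∑ e : G.edgeSet, (w.edges.count ↑e : ℝ) * ρ e

/-- The admissible set A(Γ): densities that are nonnegative and give every walk of Γ
ρ-length at least one. -/
def IsAdmissible (G : SimpleGraph V) [DecidableRel G.Adj]
    (Γ : Set (Σ (u : V) (v : V), G.Walk u v)) (ρ : G.edgeSet → ℝ) : Prop :=
  (∀ e, 0 ≤ ρ e) ∧ ∀ γ ∈ Γ, 1 ≤ rhoLength G ρ γ.2.2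

/-- The p-energy ℰ_p(ρ) = Σ_{e∈E} σ(e) |ρ(e)|^p, for 1 ≤ p < ∞. -/
noncomputable def energy (G : SimpleGraph V) [DecidableRel G.Adj]
    (σ : G.edgeSet → ℝ) (p : ℝ) (ρ : G.edgeSet → ℝ) : ℝ :=
  ∑ e : G.edgeSet, σ e * |ρ e| ^ p

/-- The ∞-energy ℰ_∞(ρ) = max_{e∈E} |ρ(e)|. -/
noncomputable def energyInf (G : SimpleGraph V) [DecidableRel G.Adj]
    (ρ : G.edgeSet → ℝ) : ℝ :=
  ⨆ e : G.edgeSet, |ρ e|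

/-- The p-modulus Mod_p(Γ) = inf_{ρ ∈ A(Γ)} ℰ_p(ρ), for 1 ≤ p < ∞. -/
noncomputable def modulus (G : SimpleGraph V) [DecidableRel G.Adj]
    (σ : G.edgeSet → ℝ) (p : ℝ) (Γ : Set (Σ (u : V) (v : V), G.Walk u v)) : ℝ :=
  sInf (energy G σ p '' {ρ | IsAdmissible G Γ ρ})

/-- The ∞-modulus Mod_∞(Γ) = inf_{ρ ∈ A(Γ)} ℰ_∞(ρ). -/
noncomputable def modulusInf (G : SimpleGraph V) [DecidableRel G.Adj]
    (Γ : Set (Σ (u : V) (v : V), G.Walk u v)) : ℝ :=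
  sInf (energyInf G '' {ρ | IsAdmissible G Γ ρ})

/-- The connecting family Γ(s,t): all walks that start at s and end at t. -/
def connectingFamily (G : SimpleGraph V) (s t : V) :
    Set (Σ (u : V) (v : V), G.Walk u v) :=
  {γ | γ.1 = s ∧ γ.2.1 = t}

/-- The minimum graph length ℓ(Γ) = inf_{γ ∈ Γ} ℓ(γ) (smallest number of hops). -/
noncomputable def minLength (G : SimpleGraph V)
    (Γ : Set (Σ (u : V) (v : V), G.Walk u v)) : ℕ :=
  sInf {n : ℕ | ∃ γ ∈ Γ, γ.2.2.length = n}

/-- |φ(x) - φ(y)|, the potential drop of φ : V → ℝ across an edge, as a function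
on unordered pairs. -/
noncomputable def potDrop (φ : V → ℝ) : Sym2 V → ℝ :=
  Sym2.lift ⟨fun x y => |φ x - φ y|, fun x y => abs_sub_comm (φ x) (φ y)⟩

/-- The constant density `1` is admissible, since every walk of the family has an edge. In
particular the infimum defining the modulus is over a nonempty set. -/
lemma isAdmissible_one (G : SimpleGraph V) [DecidableRel G.Adj]
    (Γ : Set (Σ (u : V) (v : V), G.Walk u v)) (hΓ : ∀ γ ∈ Γ, 0 < γ.2.2.length) :
    IsAdmissible G Γ (fun _ => 1) := by
  refine ⟨fun _ => zero_le_one, fun γ hγ => ?_⟩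
  have hlen : 0 < γ.2.2.edges.length := by
    rw [SimpleGraph.Walk.length_edges]
    exact hΓ γ hγ
  obtain ⟨e, he⟩ := List.exists_mem_of_length_pos hlen
  have hcount : (1 : ℝ) ≤ (γ.2.2.edges.count e : ℝ) := by
    exact_mod_cast List.count_pos_iff.2 he
  have hle := Finset.single_le_sum
    (f := fun e : G.edgeSet => (γ.2.2.edges.count ↑e : ℝ) * 1)
    (fun _ _ => by positivity)
    (Finset.mem_univ ⟨e, γ.2.2.edges_subset_edgeSet he⟩)
  simp only [mul_one] at hle
  simp only [rhoLength, mul_one]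
  exact hcount.trans hle

/-- Truncating an admissible density at height `1` keeps it admissible: a walk that traverses
an edge of density at least `1` still has length at least `1` after truncation, and the length
of any other walk does not change. -/
lemma IsAdmissible.min_one {G : SimpleGraph V} [DecidableRel G.Adj]
    {Γ : Set (Σ (u : V) (v : V), G.Walk u v)} {ρ : G.edgeSet → ℝ} (h : IsAdmissible G Γ ρ) :
    IsAdmissible G Γ (fun e => min (ρ e) 1) := by
  have h0 : ∀ e, 0 ≤ min (ρ e) 1 := fun e => le_min (h.1 e) zero_le_one
  refine ⟨h0, fun γ hγ => ?_⟩
  by_cases hbig : ∃ e : G.edgeSet, ↑e ∈ γ.2.2.edges ∧ 1 ≤ ρ e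
  · obtain ⟨e, he, hρ⟩ := hbig
    have hcount : (1 : ℝ) ≤ (γ.2.2.edges.count ↑e : ℝ) := by
      exact_mod_cast List.count_pos_iff.2 he
    have hle := Finset.single_le_sum
      (f := fun e : G.edgeSet => (γ.2.2.edges.count ↑e : ℝ) * min (ρ e) 1)
      (fun e _ => mul_nonneg (Nat.cast_nonneg _) (h0 e)) (Finset.mem_univ e)
    simp only [min_eq_right hρ, mul_one] at hle
    exact hcount.trans hle
  · push Not at hbig
    refine (h.2 γ hγ).trans_eq (Finset.sum_congr rfl fun e _ => ?_)
    by_cases he : ↑e ∈ γ.2.2.edges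
    · simp only [min_eq_left (hbig e he).le]
    · simp [List.count_eq_zero.2 he]

lemma modulus_le_energy {G : SimpleGraph V} [DecidableRel G.Adj]
    {Γ : Set (Σ (u : V) (v : V), G.Walk u v)} {σ ρ : G.edgeSet → ℝ} (p : ℝ)
    (hσ : ∀ e, 0 < σ e) (h : IsAdmissible G Γ ρ) : modulus G σ p Γ ≤ energy G σ p ρ := by
  refine csInf_le ⟨0, ?_⟩ ⟨ρ, h, rfl⟩
  rintro _ ⟨τ, -, rfl⟩
  exact Finset.sum_nonneg fun e _ =>
    mul_nonneg (hσ e).le (Real.rpow_nonneg (abs_nonneg _) p)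

lemma le_modulus {G : SimpleGraph V} [DecidableRel G.Adj]
    {Γ : Set (Σ (u : V) (v : V), G.Walk u v)} (hΓ : ∀ γ ∈ Γ, 0 < γ.2.2.length)
    {σ : G.edgeSet → ℝ} {p c : ℝ}
    (h : ∀ ρ, IsAdmissible G Γ ρ → c ≤ energy G σ p ρ) : c ≤ modulus G σ p Γ := by
  refine le_csInf ⟨_, _, isAdmissible_one G Γ hΓ, rfl⟩ ?_
  rintro _ ⟨ρ, hρ, rfl⟩
  exact h ρ hρ

/-- The one-sided Lipschitz estimate. For a density `τ` with values in `[0, 1]`, passing from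
`σ₁` to `σ₂` raises the energy by at most `∑ |σ₂ - σ₁|`, and by truncation only such densities
matter. -/
lemma modulus_sub_le {G : SimpleGraph V} [DecidableRel G.Adj]
    {Γ : Set (Σ (u : V) (v : V), G.Walk u v)} (hΓ : ∀ γ ∈ Γ, 0 < γ.2.2.length)
    {p : ℝ} (hp : 1 ≤ p) {σ₁ σ₂ : G.edgeSet → ℝ} (h₁ : ∀ e, 0 < σ₁ e) (h₂ : ∀ e, 0 < σ₂ e) :
    modulus G σ₂ p Γ - modulus G σ₁ p Γ
      ≤ (Fintype.card ↥G.edgeSet : ℝ) * ⨆ e : G.edgeSet, |σ₂ e - σ₁ e| := by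
  set D := ⨆ e : G.edgeSet, |σ₂ e - σ₁ e|
  have hD : ∀ e, |σ₂ e - σ₁ e| ≤ D := le_ciSup (Set.finite_range _).bddAbove
  rw [sub_le_comm]
  refine le_modulus hΓ fun ρ hρ => ?_
  rw [sub_le_iff_le_add]
  refine (modulus_le_energy p h₂ hρ.min_one).trans ?_
  have hsum : energy G σ₁ p ρ + (Fintype.card ↥G.edgeSet : ℝ) * D
      = ∑ e : G.edgeSet, (σ₁ e * |ρ e| ^ p + D) := by
    simp [energy, Finset.sum_add_distrib]
  rw [hsum]
  refine Finset.sum_le_sum fun e _ => ?_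
  have h0 : 0 ≤ min (ρ e) 1 := le_min (hρ.1 e) zero_le_one
  rw [abs_of_nonneg h0, abs_of_nonneg (hρ.1 e)]
  have hpow0 : 0 ≤ min (ρ e) 1 ^ p := Real.rpow_nonneg h0 p
  have hpow1 : min (ρ e) 1 ^ p ≤ 1 := Real.rpow_le_one h0 (min_le_right _ _) (by linarith)
  have hpow : min (ρ e) 1 ^ p ≤ ρ e ^ p :=
    Real.rpow_le_rpow h0 (min_le_left _ _) (by linarith)
  have hdiff : (σ₂ e - σ₁ e) * min (ρ e) 1 ^ p ≤ D :=
    calc (σ₂ e - σ₁ e) * min (ρ e) 1 ^ p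
        ≤ |σ₂ e - σ₁ e| * min (ρ e) 1 ^ p :=
          mul_le_mul_of_nonneg_right (le_abs_self _) hpow0
      _ ≤ |σ₂ e - σ₁ e| := mul_le_of_le_one_right (abs_nonneg _) hpow1
      _ ≤ D := hD e
  have hmono := mul_le_mul_of_nonneg_left hpow (h₁ e).le
  linarith

/-- σ ↦ Mod_p(Γ;σ) is Lipschitz with constant m = |E| in the max norm,
and concave, on positive weight functions. -/
theorem modulus_lipschitz_and_concave_in_sigma
    (G : SimpleGraph V) [DecidableRel G.Adj] [Nonempty ↥G.edgeSet]
    (Γ : Set (Σ (u : V) (v : V), G.Walk u v))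
    (hne : Γ.Nonempty) (hΓ : ∀ γ ∈ Γ, 0 < γ.2.2.length)
    (p : ℝ) (hp : 1 ≤ p) :
    (∀ σ₁ σ₂ : G.edgeSet → ℝ, (∀ e, 0 < σ₁ e) → (∀ e, 0 < σ₂ e) →
      |modulus G σ₂ p Γ - modulus G σ₁ p Γ|
        ≤ (Fintype.card ↥G.edgeSet : ℝ) * ⨆ e : G.edgeSet, |σ₂ e - σ₁ e|) ∧
    (∀ σ₁ σ₂ : G.edgeSet → ℝ, (∀ e, 0 < σ₁ e) → (∀ e, 0 < σ₂ e) →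
      ∀ θ : ℝ, 0 ≤ θ → θ ≤ 1 →
        θ * modulus G σ₁ p Γ + (1 - θ) * modulus G σ₂ p Γ
          ≤ modulus G (fun e => θ * σ₁ e + (1 - θ) * σ₂ e) p Γ) := by
  refine ⟨fun σ₁ σ₂ h₁ h₂ => ?_, fun σ₁ σ₂ h₁ h₂ θ hθ0 hθ1 => le_modulus hΓ fun ρ hρ => ?_⟩
  · refine abs_sub_le_iff.2 ⟨modulus_sub_le hΓ hp h₁ h₂, ?_⟩
    simpa only [abs_sub_comm] using modulus_sub_le hΓ hp h₂ h₁
  · have hlin : energy G (fun e => θ * σ₁ e + (1 - θ) * σ₂ e) p ρ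
        = θ * energy G σ₁ p ρ + (1 - θ) * energy G σ₂ p ρ := by
      simp only [energy, Finset.mul_sum, ← Finset.sum_add_distrib]
      exact Finset.sum_congr rfl fun e _ => by ring
    rw [hlin]
    exact add_le_add
      (mul_le_mul_of_nonneg_left (modulus_le_energy p h₁ hρ) hθ0)
      (mul_le_mul_of_nonneg_left (modulus_le_energy p h₂ hρ) (sub_nonneg.2 hθ1))
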